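/- Let X be uniform on [0,1], f(x) = x^{−α} with 0 < α < 1/2, and fix ε ∈ (0,1]. Among all intervals (a, a+ε] ⊂ [0,1], the conditional variance Var(f(X) | X ∈ (a, a+ε]) is maximized at a = 0. -/

import Mathlib

open MeasureTheory ProbabilityTheory

/-- Increments of `x ↦ x ^ (-α)` shrink under translation to the right. -/
lemma antitoneOn_rpow_neg_sub_translate {α a : ℝ} (hα : 0 < α) (ha : 0 ≤ a) :
    AntitoneOn (fun x : ℝ => x ^ (-α) - (x + a) ^ (-α)) (Set.Ioi 0) := by
  have hd : ∀ x ∈ Set.Ioi (0 : ℝ), HasDerivAt (fun x : ℝ => x ^ (-α) - (x + a) ^ (-α))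
      (-α * x ^ (-α - 1) - -α * (x + a) ^ (-α - 1)) x := by
    intro x hx
    have hx : 0 < x := hx
    have h1 := Real.hasDerivAt_rpow_const (x := x) (p := -α) (Or.inl hx.ne')
    have h2 := Real.hasDerivAt_rpow_const (x := x + a) (p := -α) (Or.inl (by positivity))
    exact h1.sub (h2.comp_add_const x a)
  refine antitoneOn_of_deriv_nonpos (convex_Ioi 0)
    (fun x hx => (hd x hx).continuousAt.continuousWithinAt) ?_ ?_
  · rw [interior_Ioi]
    exact fun x hx => (hd x hx).differentiableAt.differentiableWithinAt
  · rw [interior_Ioi]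
    intro x hx
    rw [(hd x hx).deriv]
    have h := Real.rpow_le_rpow_of_nonpos (z := -α - 1) hx (le_add_of_nonneg_right ha)
      (by linarith)
    nlinarith

lemma sq_sub_rpow_neg_translate_le {α a x y : ℝ} (hα : 0 < α) (ha : 0 ≤ a) (hx : 0 < x)
    (hy : 0 < y) :
    ((x + a) ^ (-α) - (y + a) ^ (-α)) ^ 2 ≤ (x ^ (-α) - y ^ (-α)) ^ 2 := by
  wlog hxy : x ≤ y generalizing x y
  · have h := this hy hx (le_of_not_ge hxy)
    linarith
  have h1 := antitoneOn_rpow_neg_sub_translate hα ha hx hy hxy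
  have h2 := Real.rpow_le_rpow_of_nonpos (z := -α) (by positivity : 0 < x + a)
    (by linarith : x + a ≤ y + a) (by linarith)
  simp only at h1
  exact pow_le_pow_left₀ (by linarith) (by linarith) 2

lemma cond_Ioc_uniform_eq {a ε : ℝ} (ha : 0 ≤ a) (ha' : a + ε ≤ 1) :
    (volume.restrict (Set.Icc (0 : ℝ) 1))[|Set.Ioc a (a + ε)]
      = (ENNReal.ofReal ε)⁻¹ • volume.restrict (Set.Ioc a (a + ε)) := by
  have hs : Set.Ioc a (a + ε) ⊆ Set.Icc (0 : ℝ) 1 := fun x hx =>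
    ⟨ha.trans hx.1.le, hx.2.trans ha'⟩
  rw [ProbabilityTheory.cond, Measure.restrict_restrict_of_subset hs,
    Measure.restrict_apply measurableSet_Ioc, Set.inter_eq_left.2 hs, Real.volume_Ioc,
    add_sub_cancel_left]

lemma cond_Ioc_uniform_eq_map {a ε : ℝ} (ha : 0 ≤ a) (ha' : a + ε ≤ 1) :
    (volume.restrict (Set.Icc (0 : ℝ) 1))[|Set.Ioc a (a + ε)]
      = ((volume.restrict (Set.Icc (0 : ℝ) 1))[|Set.Ioc 0 ε]).map (· + a) := by
  have h0 := cond_Ioc_uniform_eq (a := 0) (ε := ε) le_rfl (by linarith)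
  rw [zero_add] at h0
  rw [cond_Ioc_uniform_eq ha ha', h0, Measure.map_smul]
  congr 1
  have hp := ((measurePreserving_add_right volume a).restrict_preimage
    (measurableSet_Ioc (a := a) (b := a + ε))).map_eq
  rw [← hp]
  congr 2
  ext x
  simp [add_comm a]

/-- For `X` uniform on `[0,1]`, `f(x) = x^{−α}` with `0 < α < 1/2` and fixed
`ε ∈ (0,1]`, among all intervals `(a, a+ε] ⊆ [0,1]` the conditional variance
`Var(f(X) | X ∈ (a,a+ε])` is maximal at `a = 0`. -/
theorem conditional_variance_power_maximized_at_zero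
    (α : ℝ) (hα : 0 < α) (hα' : α < 1/2) (ε : ℝ) (hε : ε ∈ Set.Ioc (0:ℝ) 1)
    (a : ℝ) (ha : 0 ≤ a) (ha' : a + ε ≤ 1) :
    variance (fun x => x ^ (-α))
        ((volume.restrict (Set.Icc (0:ℝ) 1))[|Set.Ioc a (a + ε)])
      ≤ variance (fun x => x ^ (-α))
        ((volume.restrict (Set.Icc (0:ℝ) 1))[|Set.Ioc (0:ℝ) ε]) := by
  obtain ⟨hε0, hε1⟩ := hε
  have hm : Measurable fun x : ℝ => x ^ (-α) := by fun_prop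
  rw [cond_Ioc_uniform_eq_map ha ha',
    variance_map hm.aemeasurable (by fun_prop)]
  have h0 := cond_Ioc_uniform_eq (a := 0) (ε := ε) le_rfl (by linarith)
  rw [zero_add] at h0
  set μ := (volume.restrict (Set.Icc (0:ℝ) 1))[|Set.Ioc (0:ℝ) ε] with hμ
  have hc : (ENNReal.ofReal ε)⁻¹ ≠ ⊤ := by simp [hε0]
  have : IsProbabilityMeasure μ := by
    refine cond_isProbabilityMeasure ?_
    rw [Measure.restrict_apply measurableSet_Ioc,
      Set.inter_eq_left.2 (Set.Ioc_subset_Icc_self.trans (Set.Icc_subset_Icc_right hε1)), Real.volume_Ioc]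
    simp [hε0]
  have hae : ∀ᵐ x ∂μ, x ∈ Set.Ioc 0 ε := by
    rw [h0]
    exact Measure.ae_smul_measure (ae_restrict_mem measurableSet_Ioc) _
  have hL : MemLp (fun x : ℝ => x ^ (-α)) 2 μ := by
    rw [memLp_two_iff_integrable_sq hm.aestronglyMeasurable]
    have hi : Integrable (fun x : ℝ => x ^ (-α * 2)) μ := by
      rw [h0]
      refine Integrable.smul_measure ?_ hc
      exact (intervalIntegrable_iff_integrableOn_Ioc_of_le hε0.le).1
        (intervalIntegral.intervalIntegrable_rpow' (by linarith))
    refine hi.congr ?_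
    filter_upwards [hae] with x hx
    rw [Real.rpow_mul hx.1.le]
    norm_cast
  set m := ∫ x, x ^ (-α) ∂μ with hmdef
  have hm1 : 1 ≤ m := by
    have h : ∫ _, (1 : ℝ) ∂μ ≤ m := by
      refine integral_mono_ae (integrable_const _) (hL.integrable one_le_two) ?_
      filter_upwards [hae] with x hx
      exact Real.one_le_rpow_of_pos_of_le_one_of_nonpos hx.1 (hx.2.trans hε1) (by linarith)
    simpa using h
  have hmpos : 0 < m := by linarith
  obtain ⟨y, hy, hym⟩ : ∃ y : ℝ, 0 < y ∧ y ^ (-α) = m := by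
    refine ⟨m ^ (-α)⁻¹, by positivity, Real.rpow_inv_rpow hmpos.le (by linarith)⟩
  have hga : Measurable fun x : ℝ => (x + a) ^ (-α) := by fun_prop
  calc variance ((fun x => x ^ (-α)) ∘ fun x => x + a) μ
      = variance (fun x => (x + a) ^ (-α) - (y + a) ^ (-α)) μ :=
        (variance_sub_const hga.aestronglyMeasurable _).symm
    _ ≤ ∫ x, ((x + a) ^ (-α) - (y + a) ^ (-α)) ^ 2 ∂μ :=
        variance_le_expectation_sq (hga.sub_const _).aestronglyMeasurable
    _ ≤ ∫ x, (x ^ (-α) - m) ^ 2 ∂μ := by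
        refine integral_mono_of_nonneg (.of_forall fun x => sq_nonneg _)
          (hL.sub (memLp_const m)).integrable_sq ?_
        filter_upwards [hae] with x hx
        rw [← hym]
        exact sq_sub_rpow_neg_translate_le hα ha hx.1 hy
    _ = variance (fun x => x ^ (-α)) μ := (variance_eq_integral hm.aemeasurable).symm
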